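/- The generalized Top Trading Cycles rule TTC fails drop strategy-proofness on the responsive domain: in the reallocation problem with N = {1,2,3}, O = {a,b,c,d}, and endowment ω = ({a,b}, {c}, {d}), there exist a responsive profile P and a drop strategy P'_1 ∈ ℛ_1 for P_1 such that TTC_1(P'_1, P_{-1}) P_1 TTC_1(P). -/

import Mathlib

attribute [local instance] Classical.propDecidable

namespace Realloc

/-- A strict preference over bundles: a strict total order on `Finset O`. -/
structure Pref (O : Type) : Type where
  strict : Finset O → Finset O → Prop
  total : ∀ X Y : Finset O, strict X Y ∨ X = Y ∨ strict Y X
  irrefl : ∀ X : Finset O, ¬ strict X X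
  trans : ∀ X Y Z : Finset O, strict X Y → strict Y Z → strict X Z

/-- The weak ("at least as good as") relation associated with a strict preference. -/
def Pref.weak {O : Type} (p : Pref O) (X Y : Finset O) : Prop :=
  p.strict X Y ∨ X = Y

/-- An allocation: nonempty pairwise disjoint bundles whose union is all of `O`. -/
structure Allocation (N O : Type) : Type where
  bundle : N → Finset O
  nonempty : ∀ i : N, (bundle i).Nonempty
  disj : ∀ i j : N, i ≠ j → ∀ o : O, o ∈ bundle i → o ∉ bundle j
  cover : ∀ o : O, ∃ i : N, o ∈ bundle i

variable {N O : Type}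

/-- Two preferences induce the same marginal (singleton) ranking over objects. -/
def MargEq (p q : Pref O) : Prop :=
  ∀ x y : O, p.strict {x} {y} ↔ q.strict {x} {y}

/-- Responsive preferences. -/
def Responsive [DecidableEq O] (p : Pref O) : Prop :=
  ∀ (X : Finset O) (y z : O), y ∉ X → z ∉ X →
    (p.strict (insert y X) (insert z X) ↔ p.strict {y} {z})

/-- Lexicographic preferences: `X` is preferred to `Y` iff the best object of the
symmetric difference belongs to `X`. -/
def Lexicographic [DecidableEq O] (p : Pref O) : Prop :=
  ∀ X Y : Finset O, X ≠ Y →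
    (p.strict X Y ↔
      ∃ x ∈ X \ Y, ∀ y ∈ (X \ Y) ∪ (Y \ X), y ≠ x → p.strict {x} {y})

/-- Conditionally lexicographic preferences. -/
def CondLex [DecidableEq O] (p : Pref O) : Prop :=
  ∀ X Y : Finset O, Disjoint X Y → X.Nonempty →
    ∃! x : O, x ∈ X ∧ ∀ Z : Finset O, Z ⊆ X.erase x → p.strict (insert x Y) (Y ∪ Z)

/-- Monotonic preferences. -/
def Monot (p : Pref O) : Prop :=
  ∀ X Y : Finset O, Y ⊆ X → p.weak X Y

/-- `p'` is a subset-drop strategy for `p` (relative to endowment `ωi`):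
some set `X ⊆ O ∖ ωi` is moved to the bottom of the marginal ranking, preserving
the relative marginal order within `X` and within its complement. -/
def SubsetDropStrategy (ωi : Finset O) (p p' : Pref O) : Prop :=
  ∃ X : Set O, (∀ x ∈ X, x ∉ ωi) ∧
    (∀ x ∈ X, ∀ y ∈ X, (p.strict {x} {y} ↔ p'.strict {x} {y})) ∧
    (∀ x ∉ X, ∀ y ∉ X, (p.strict {x} {y} ↔ p'.strict {x} {y})) ∧
    (∀ x ∈ X, ∀ y ∉ X, p'.strict {y} {x})

/-- `p'` is a drop strategy for `p`: a single object `x ∉ ωi` is moved to the bottom. -/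
def DropStrategy (ωi : Finset O) (p p' : Pref O) : Prop :=
  ∃ x : O, x ∉ ωi ∧
    (∀ u v : O, u ≠ x → v ≠ x → (p.strict {u} {v} ↔ p'.strict {u} {v})) ∧
    (∀ y : O, y ≠ x → p'.strict {y} {x})

/-- `p'` is a truncation strategy for `p`: the tail set
`{o ∈ O ∖ ωi : {x} R {o}}` (for some object `x`) is moved to the bottom. -/
def TruncationStrategy (ωi : Finset O) (p p' : Pref O) : Prop :=
  ∃ x : O,
    (∀ u v : O, (u ∉ ωi ∧ p.weak {x} {u}) → (v ∉ ωi ∧ p.weak {x} {v}) →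
      (p.strict {u} {v} ↔ p'.strict {u} {v})) ∧
    (∀ u v : O, ¬(u ∉ ωi ∧ p.weak {x} {u}) → ¬(v ∉ ωi ∧ p.weak {x} {v}) →
      (p.strict {u} {v} ↔ p'.strict {u} {v})) ∧
    (∀ u v : O, (u ∉ ωi ∧ p.weak {x} {u}) → ¬(v ∉ ωi ∧ p.weak {x} {v}) →
      p'.strict {v} {u})

/-- There is a Pareto-improving trading cycle at the assignment `μ`:
a cyclic sequence of `k+1 ≥ 1` distinct objects and distinct agents, each object owned
(at `μ`) by its agent, such that every agent on the cycle strictly gains by swapping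
the object she relinquishes for the object she points to. -/
def ParetoImprovingCycleAt [DecidableEq O] (pref : N → Pref O) (μ : N → Finset O) : Prop :=
  ∃ (k : ℕ) (obj : Fin (k + 1) → O) (ag : Fin (k + 1) → N),
    Function.Injective obj ∧ Function.Injective ag ∧
    (∀ ℓ : Fin (k + 1), obj ℓ ∈ μ (ag ℓ)) ∧
    (∀ ℓ : Fin (k + 1),
      (pref (ag ℓ)).strict ((insert (obj (ℓ + 1)) (μ (ag ℓ))).erase (obj ℓ)) (μ (ag ℓ)))

/-- Individual-good efficiency of an assignment at a profile. -/
def IGEat [DecidableEq O] (pref : N → Pref O) (μ : N → Finset O) : Prop :=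
  ¬ ParetoImprovingCycleAt pref μ

/-- `ν` Pareto dominates `μ` at the profile `pref`. -/
def ParetoDominates (pref : N → Pref O) (ν μ : N → Finset O) : Prop :=
  (∀ i, (pref i).weak (ν i) (μ i)) ∧ ∃ j, (pref j).strict (ν j) (μ j)

/-- Pareto efficiency of an assignment at a profile. -/
def ParetoEffAt (pref : N → Pref O) (μ : N → Finset O) : Prop :=
  ∀ ν : Allocation N O, ¬ ParetoDominates pref ν.bundle μ

/-- The marginally most-preferred object of a (nonempty) finite set of objects. -/
noncomputable def Pref.best [Nonempty O] (p : Pref O) (S : Finset O) : O :=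
  if h : ∃ x : O, x ∈ S ∧ ∀ y ∈ S, p.weak {x} {y} then h.choose
  else Classical.arbitrary O

/-- The conditionally most-preferred object of `S` given the already-held bundle `Y`. -/
noncomputable def Pref.cbest [Nonempty O] [DecidableEq O] (p : Pref O) (S Y : Finset O) : O :=
  if h : ∃ x : O, x ∈ S ∧ ∀ Z : Finset O, Z ⊆ S.erase x → p.strict (insert x Y) (Y ∪ Z)
  then h.choose else Classical.arbitrary O

/-- The initial owner of an object. -/
noncomputable def Allocation.owner (ω : Allocation N O) (o : O) : N :=
  (ω.cover o).choose

/-- One pass of the generalized TTC algorithm, with fuel.  At each step every agent points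
to her marginally best remaining object and every remaining object points to its owner;
the objects lying on cycles of this functional graph (the periodic points of `g`) are
traded: the owner of a cycling object receives the object she points to. -/
noncomputable def TTCaux [Nonempty O] [DecidableEq O] (pref : N → Pref O) (own : O → N) :
    ℕ → Finset O → N → Finset O
  | 0, _, _ => ∅
  | fuel + 1, S, i =>
      let g : O → O := fun o => (pref (own o)).best S
      let C : Finset O := S.filter fun o => ∃ k : ℕ, 0 < k ∧ g^[k] o = o
      if S.Nonempty then
        ((C.filter fun o => own o = i).image g) ∪ TTCaux pref own fuel (S \ C) i
      else ∅

/-- The generalized Top Trading Cycles rule: the bundle received by agent `i`. -/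
noncomputable def TTC [Fintype O] [Nonempty O] [DecidableEq O]
    (pref : N → Pref O) (ω : Allocation N O) (i : N) : Finset O :=
  TTCaux pref ω.owner (Fintype.card O + 1) Finset.univ i

/-- One pass of the Augmented TTC algorithm, with fuel: agents point to their
conditionally most-preferred remaining object given the bundle assigned so far. -/
noncomputable def ATTCaux [Nonempty O] [DecidableEq O] (pref : N → Pref O) (own : O → N) :
    ℕ → Finset O → (N → Finset O) → N → Finset O
  | 0, _, μ => μ
  | fuel + 1, S, μ =>
      let g : O → O := fun o => (pref (own o)).cbest S (μ (own o))
      let C : Finset O := S.filter fun o => ∃ k : ℕ, 0 < k ∧ g^[k] o = o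
      if S.Nonempty then
        ATTCaux pref own fuel (S \ C) (fun j => μ j ∪ ((C.filter fun o => own o = j).image g))
      else μ

/-- The Augmented Top Trading Cycles rule: the bundle received by agent `i`. -/
noncomputable def ATTC [Fintype O] [Nonempty O] [DecidableEq O]
    (pref : N → Pref O) (ω : Allocation N O) (i : N) : Finset O :=
  ATTCaux pref ω.owner (Fintype.card O + 1) Finset.univ (fun _ => ∅) i

/-- Conditional marginal preference of `p` given the bundle `Y`:
`x` is conditionally better than `y`. -/
def CMarg [DecidableEq O] (p : Pref O) (Y : Finset O) (x y : O) : Prop :=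
  p.strict ((insert x Y).erase y) ((insert y Y).erase x)

/-- Weak conditional marginal preference. -/
def CMargWeak [DecidableEq O] (p : Pref O) (Y : Finset O) (x y : O) : Prop :=
  CMarg p Y x y ∨ x = y

/-- Drop strategy on the conditionally lexicographic domain: `x ∉ ωi` becomes the worst,
with preferences over bundles avoiding `x` unchanged. -/
def DropStrategyCL (ωi : Finset O) (p p' : Pref O) : Prop :=
  ∃ x : O, x ∉ ωi ∧
    (∀ Y : Finset O, Y.Nonempty → x ∉ Y → p'.strict Y {x}) ∧
    (∀ Y Z : Finset O, x ∉ Y → x ∉ Z → (p'.strict Y Z ↔ p.strict Y Z))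

section Rules

variable [DecidableEq O]

/-- Balancedness of a rule on the domain `D`. -/
def RBAL (D : Pref O → Prop) (ω : Allocation N O)
    (φ : (N → Pref O) → Allocation N O) : Prop :=
  ∀ P : N → Pref O, (∀ i, D (P i)) → ∀ i, ((φ P).bundle i).card = (ω.bundle i).card

/-- Individual-good efficiency of a rule on the domain `D`. -/
def RIGE (D : Pref O → Prop) (φ : (N → Pref O) → Allocation N O) : Prop :=
  ∀ P : N → Pref O, (∀ i, D (P i)) → IGEat P ((φ P).bundle)

/-- Pareto efficiency of a rule on the domain `D`. -/
def RPE (D : Pref O → Prop) (φ : (N → Pref O) → Allocation N O) : Prop :=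
  ∀ P : N → Pref O, (∀ i, D (P i)) → ParetoEffAt P ((φ P).bundle)

/-- Individual rationality of a rule on the domain `D`. -/
def RIR (D : Pref O → Prop) (ω : Allocation N O)
    (φ : (N → Pref O) → Allocation N O) : Prop :=
  ∀ P : N → Pref O, (∀ i, D (P i)) → ∀ i, (P i).weak ((φ P).bundle i) (ω.bundle i)

/-- The worst-endowment lower bound of a rule on the domain `D`: no agent receives an
object marginally worse than the marginally worst object of her endowment. -/
def RWELB (D : Pref O → Prop) (ω : Allocation N O)
    (φ : (N → Pref O) → Allocation N O) : Prop :=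
  ∀ P : N → Pref O, (∀ i, D (P i)) → ∀ i, ∀ o ∈ (φ P).bundle i,
    ∀ w ∈ ω.bundle i, (∀ y ∈ ω.bundle i, (P i).weak {y} {w}) → (P i).weak {o} {w}

/-- Marginality of a rule on the domain `D`. -/
def RMAR (D : Pref O → Prop) (φ : (N → Pref O) → Allocation N O) : Prop :=
  ∀ P P' : N → Pref O, (∀ i, D (P i)) → (∀ i, D (P' i)) →
    (∀ i, MargEq (P i) (P' i)) → ∀ i, (φ P).bundle i = (φ P').bundle i

variable [DecidableEq N]

/-- Truncation-proofness of a rule on the domain `D`. -/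
def RTP (D : Pref O → Prop) (ω : Allocation N O)
    (φ : (N → Pref O) → Allocation N O) : Prop :=
  ∀ P : N → Pref O, (∀ i, D (P i)) → ∀ i : N, ∀ p' : Pref O, D p' →
    TruncationStrategy (ω.bundle i) (P i) p' →
    (P i).weak ((φ P).bundle i) ((φ (Function.update P i p')).bundle i)

/-- Drop strategy-proofness of a rule on the domain `D`. -/
def RDSP (D : Pref O → Prop) (ω : Allocation N O)
    (φ : (N → Pref O) → Allocation N O) : Prop :=
  ∀ P : N → Pref O, (∀ i, D (P i)) → ∀ i : N, ∀ p' : Pref O, D p' →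
    DropStrategy (ω.bundle i) (P i) p' →
    (P i).weak ((φ P).bundle i) ((φ (Function.update P i p')).bundle i)

/-- Subset-drop strategy-proofness of a rule on the domain `D`. -/
def RSDSP (D : Pref O → Prop) (ω : Allocation N O)
    (φ : (N → Pref O) → Allocation N O) : Prop :=
  ∀ P : N → Pref O, (∀ i, D (P i)) → ∀ i : N, ∀ p' : Pref O, D p' →
    SubsetDropStrategy (ω.bundle i) (P i) p' →
    (P i).weak ((φ P).bundle i) ((φ (Function.update P i p')).bundle i)

/-- Worst-endowment lower bound on the conditionally lexicographic domain, formulated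
with conditional marginal preferences. -/
def RWELBCL (D : Pref O → Prop) (ω : Allocation N O)
    (φ : (N → Pref O) → Allocation N O) : Prop :=
  ∀ P : N → Pref O, (∀ i, D (P i)) → ∀ i, ∀ o ∈ (φ P).bundle i,
    ∀ w ∈ ω.bundle i,
      (∀ y ∈ ω.bundle i, CMargWeak (P i) ((φ P).bundle i) y w) →
      CMargWeak (P i) ((φ P).bundle i) o w

/-- Drop strategy-proofness on the conditionally lexicographic domain. -/
def RDSPCL (D : Pref O → Prop) (ω : Allocation N O)
    (φ : (N → Pref O) → Allocation N O) : Prop :=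
  ∀ P : N → Pref O, (∀ i, D (P i)) → ∀ i : N, ∀ p' : Pref O, D p' →
    DropStrategyCL (ω.bundle i) (P i) p' →
    (P i).weak ((φ P).bundle i) ((φ (Function.update P i p')).bundle i)

end Rules

/-- Agent `i`'s opportunity set under TTC when reporting `p`: the set of bundles
she may receive as others' (responsive) reports vary. -/
def Opp [Fintype O] [Nonempty O] [DecidableEq O] (ω : Allocation N O) (i : N)
    (p : Pref O) : Set (Finset O) :=
  {A | ∃ Q : N → Pref O, (∀ j, Responsive (Q j)) ∧ Q i = p ∧ TTC Q ω i = A}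


lemma wsum_eq (w : Fin 4 → ℕ) (X : Finset (Fin 4)) :
    ∑ i ∈ X, w i = (if 0 ∈ X then w 0 else 0) + (if 1 ∈ X then w 1 else 0)
      + (if 2 ∈ X then w 2 else 0) + (if 3 ∈ X then w 3 else 0) := by
  rw [← Fin.sum_univ_four (fun i => if i ∈ X then w i else 0)]
  rw [← Finset.sum_filter]
  congr 1
  ext; simp

/-- Additive preference from a weight vector with injective subset sums. -/
def wPref (w : Fin 4 → ℕ)
    (h : ∀ X Y : Finset (Fin 4), ∑ i ∈ X, w i = ∑ i ∈ Y, w i → X = Y) : Pref (Fin 4) where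
  strict X Y := ∑ i ∈ Y, w i < ∑ i ∈ X, w i
  total X Y := by
    rcases lt_trichotomy (∑ i ∈ Y, w i) (∑ i ∈ X, w i) with h1 | h1 | h1
    · exact Or.inl h1
    · exact Or.inr (Or.inl (h _ _ h1.symm))
    · exact Or.inr (Or.inr h1)
  irrefl X := lt_irrefl _
  trans X Y Z h1 h2 := lt_trans h2 h1

lemma wPref_resp (w h) : Responsive (wPref w h) := by
  intro X y z hy hz
  simp [wPref, Finset.sum_insert hy, Finset.sum_insert hz]

lemma inj_of (a b c d : ℕ)
    (h : ∀ x y z u x' y' z' u' : Bool, 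
      (bif x then a else 0) + (bif y then b else 0) + (bif z then c else 0) + (bif u then d else 0)
      = (bif x' then a else 0) + (bif y' then b else 0) + (bif z' then c else 0)
        + (bif u' then d else 0) → x = x' ∧ y = y' ∧ z = z' ∧ u = u') :
    ∀ X Y : Finset (Fin 4), ∑ i ∈ X, ![a,b,c,d] i = ∑ i ∈ Y, ![a,b,c,d] i → X = Y := by
  intro X Y hXY
  rw [wsum_eq, wsum_eq] at hXY
  have := h (decide (0 ∈ X)) (decide (1 ∈ X)) (decide (2 ∈ X)) (decide (3 ∈ X))
    (decide (0 ∈ Y)) (decide (1 ∈ Y)) (decide (2 ∈ Y)) (decide (3 ∈ Y)) (by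
      simpa [Bool.cond_decide] using hXY)
  simp only [decide_eq_decide] at this
  ext i
  fin_cases i
  · exact this.1
  · exact this.2.1
  · exact this.2.2.1
  · exact this.2.2.2

lemma best_w (w h) (S : Finset (Fin 4)) (x : Fin 4) (hx : x ∈ S)
    (hb : ∀ y ∈ S, w y ≤ w x) : (wPref w h).best S = x := by
  have hex : ∃ x : Fin 4, x ∈ S ∧ ∀ y ∈ S, (wPref w h).weak {x} {y} := by
    refine ⟨x, hx, fun y hy => ?_⟩
    rcases (hb y hy).lt_or_eq with h1 | h1
    · left; simpa [wPref] using h1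
    · right; apply h; simpa using h1.symm
  unfold Pref.best
  rw [dif_pos hex]
  obtain ⟨h1, h2⟩ := hex.choose_spec
  rcases h2 x hx with h3 | h3
  · simp only [wPref, Finset.sum_singleton] at h3
    exact absurd (hb _ h1) (not_le.mpr h3)
  · simpa using h3

lemma step (pref : Fin 3 → Pref (Fin 4)) (own : Fin 4 → Fin 3) (n : ℕ) (S C S' T : Finset (Fin 4))
    (i : Fin 3) (g : Fin 4 → Fin 4) (hne : S.Nonempty) (hCS : ∀ o ∈ C, o ∈ S)
    (hg : ∀ o ∈ S, (pref (own o)).best S = g o) (hgC : ∀ o ∈ S, g o ∈ C)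
    (hper : ∀ o ∈ C, g (g (g (g (g (g o))))) = o)
    (hS' : ∀ o, o ∈ S' ↔ o ∈ S ∧ o ∉ C)
    (hT : ∀ x, x ∈ T ↔ ∃ o ∈ C, own o = i ∧ g o = x) :
    TTCaux pref own (n + 1) S i = T ∪ TTCaux pref own n S' i := by
  have hit : ∀ k : ℕ, ∀ o ∈ S, (fun o => (pref (own o)).best S)^[k] o = g^[k] o ∧ g^[k] o ∈ S := by
    intro k
    induction k with
    | zero => intro o ho; exact ⟨rfl, ho⟩
    | succ k ih =>
      intro o ho
      simp only [Function.iterate_succ_apply]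
      rw [hg o ho]
      exact ih _ (hCS _ (hgC o ho))
  have hC : (S.filter fun o => ∃ k : ℕ, 0 < k ∧ (fun o => (pref (own o)).best S)^[k] o = o) = C := by
    ext o
    rw [Finset.mem_filter]
    constructor
    · rintro ⟨ho, k, hk, hko⟩
      obtain ⟨k, rfl⟩ : ∃ m, k = m + 1 := ⟨k - 1, by omega⟩
      rw [(hit _ o ho).1, Function.iterate_succ_apply'] at hko
      rw [← hko]
      exact hgC _ (hit k o ho).2
    · intro ho
      exact ⟨hCS o ho, 6, by norm_num, by rw [(hit _ o (hCS o ho)).1]; exact hper o ho⟩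
  have hT' : ((C.filter fun o => own o = i).image fun o => (pref (own o)).best S) = T := by
    ext x
    rw [hT]
    simp only [Finset.mem_image, Finset.mem_filter]
    constructor
    · rintro ⟨o, ⟨h1, h2⟩, h3⟩
      exact ⟨o, h1, h2, by rw [← h3, hg o (hCS o h1)]⟩
    · rintro ⟨o, h1, h2, h3⟩
      exact ⟨o, ⟨h1, h2⟩, by rw [← h3, hg o (hCS o h1)]⟩
  have hS : S \ C = S' := by
    ext o; rw [hS', Finset.mem_sdiff]
  rw [TTCaux]
  simp only [if_pos hne]
  rw [hC, hS]
  congr 1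
  rw [← hT']
  congr!

lemma aux_empty (pref : Fin 3 → Pref (Fin 4)) (own : Fin 4 → Fin 3) (n : ℕ) (i : Fin 3) :
    TTCaux pref own n ∅ i = ∅ := by
  cases n <;> simp [TTCaux]

lemma inj0 : ∀ X Y : Finset (Fin 4), ∑ i ∈ X, ![6,3,7,5] i = ∑ i ∈ Y, ![6,3,7,5] i → X = Y :=
  inj_of 6 3 7 5 (by simp)
lemma inj0' : ∀ X Y : Finset (Fin 4), ∑ i ∈ X, ![8,2,1,4] i = ∑ i ∈ Y, ![8,2,1,4] i → X = Y :=
  inj_of 8 2 1 4 (by simp)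
lemma inj1 : ∀ X Y : Finset (Fin 4), ∑ i ∈ X, ![8,4,2,1] i = ∑ i ∈ Y, ![8,4,2,1] i → X = Y :=
  inj_of 8 4 2 1 (by simp)
lemma inj2 : ∀ X Y : Finset (Fin 4), ∑ i ∈ X, ![8,1,4,2] i = ∑ i ∈ Y, ![8,1,4,2] i → X = Y :=
  inj_of 8 1 4 2 (by simp)

/-- TTC fails drop strategy-proofness on the responsive domain: with
N = {1,2,3}, O = {a,b,c,d} (encoded as `Fin 3`, `Fin 4` with a,b,c,d = 0,1,2,3) and
ω = ({a,b},{c},{d}), some agent can profitably deviate via a drop strategy. -/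
theorem stmt10 (ω : Allocation (Fin 3) (Fin 4))
    (hω1 : ω.bundle 0 = {0, 1}) (hω2 : ω.bundle 1 = {2}) (hω3 : ω.bundle 2 = {3}) :
    ∃ (P : Fin 3 → Pref (Fin 4)) (p' : Pref (Fin 4)),
      (∀ i, Responsive (P i)) ∧ Responsive p' ∧
      DropStrategy (ω.bundle 0) (P 0) p' ∧
      (P 0).strict (TTC (Function.update P 0 p') ω 0) (TTC P ω 0) := by
  have ho : ∀ o, o ∈ ω.bundle (ω.owner o) := fun o => (ω.cover o).choose_spec
  have hu : ∀ o i, o ∈ ω.bundle i → ω.owner o = i := by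
    intro o i h
    by_contra hne
    exact ω.disj _ _ hne o (ho o) h
  have o0 : ω.owner 0 = 0 := hu _ _ (by rw [hω1]; simp)
  have o1 : ω.owner 1 = 0 := hu _ _ (by rw [hω1]; simp)
  have o2 : ω.owner 2 = 1 := hu _ _ (by rw [hω2]; simp)
  have o3 : ω.owner 3 = 2 := hu _ _ (by rw [hω3]; simp)
  let P : Fin 3 → Pref (Fin 4) := ![wPref _ inj0, wPref _ inj1, wPref _ inj2]
  have e1 : TTC P ω 0 = {2, 1} := by
    unfold TTC
    rw [show Fintype.card (Fin 4) + 1 = 4 + 1 from rfl]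
    rw [step P ω.owner 4 Finset.univ {0, 2} {1, 3} {2} 0 ![2, 2, 0, 0],
      step P ω.owner 3 {1, 3} {3} {1} ∅ 0 ![3, 3, 3, 3],
      step P ω.owner 2 {1} {1} ∅ {1} 0 ![1, 1, 1, 1], aux_empty]
    · simp
    all_goals first
      | (simp [Fin.forall_fin_succ, Fin.exists_fin_succ, o0, o1, o2, o3]; done)
      | (simp only [Fin.forall_fin_succ, Fin.exists_fin_succ]
         simp [o0, o1, o2, o3, P]
         try (repeat' apply And.intro)
         all_goals (apply best_w <;> simp [Fin.forall_fin_succ]))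
  have e2 : TTC (Function.update P 0 (wPref _ inj0')) ω 0 = {0, 3} := by
    unfold TTC
    rw [show Fintype.card (Fin 4) + 1 = 4 + 1 from rfl]
    rw [step _ ω.owner 4 Finset.univ {0} {1, 2, 3} {0} 0 ![0, 0, 0, 0],
      step _ ω.owner 3 {1, 2, 3} {1, 2, 3} ∅ {3} 0 ![3, 3, 1, 2], aux_empty]
    · simp
    all_goals first
      | (simp [Fin.forall_fin_succ, Fin.exists_fin_succ, o0, o1, o2, o3]; done)
      | (simp only [Fin.forall_fin_succ, Fin.exists_fin_succ]
         simp [o0, o1, o2, o3, P]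
         try (repeat' apply And.intro)
         all_goals (apply best_w <;> simp [Fin.forall_fin_succ]))
  refine ⟨P, wPref _ inj0', ?_, wPref_resp _ _, ⟨2, ?_, ?_, ?_⟩, ?_⟩
  · intro i
    fin_cases i
    · exact wPref_resp _ inj0
    · exact wPref_resp _ inj1
    · exact wPref_resp _ inj2
  · rw [hω1]; simp
  · simp [P, wPref, Fin.forall_fin_succ]
  · simp [wPref, Fin.forall_fin_succ]
  · rw [e1, e2]
    simp [P, wPref]

end Realloc
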